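/- arXiv:1205.3044 — 2 statements merged into one kernel-verified Lean document; each statement's English description precedes it below -/
import Mathlib

section
/- For the quadratic-cubic normal form g(u,v) = (u, uv + (b₃/6)v³, A₂(u,v) + A₃(u,v)) with a₀₂ ≠ 0, the double point locus in the parameter plane admits a smooth parameterization γ(v) = (−(b₃/6)v² + O(v³), v); in particular its tangent direction at the origin is the v-axis. -/
open Asymptotics

open scoped ContDiff Topology in
lemma aux_extend (f : ℝ → ℝ) (hf : ContDiffAt ℝ ω f 0) :
    ∃ g : ℝ → ℝ, ContDiff ℝ (⊤ : ℕ∞) g ∧ g =ᶠ[𝓝 0] f := by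
  have h1 : ∀ᶠ x in 𝓝 (0:ℝ), ContDiffAt ℝ ω f x := hf.eventually (by simp)
  obtain ⟨r, hr, hb⟩ := Metric.eventually_nhds_iff_ball.1 h1
  let χ : ContDiffBump (0:ℝ) := ⟨r/4, r/2, by linarith, by linarith⟩
  refine ⟨fun x => χ x * f x, ?_, ?_⟩
  · rw [contDiff_iff_contDiffAt]
    intro x
    by_cases hx : x ∈ Metric.ball (0:ℝ) r
    · exact χ.contDiff.contDiffAt.mul ((hb x hx).of_le (by exact le_top))
    · have : (fun x => χ x * f x) =ᶠ[𝓝 x] fun _ => 0 := by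
        have hx' : x ∉ tsupport χ := by
          rw [χ.tsupport_eq]
          simp only [Metric.mem_ball, Metric.mem_closedBall] at hx ⊢
          show ¬ (dist x 0 ≤ r/2)
          linarith
        have := notMem_tsupport_iff_eventuallyEq.1 hx'
        filter_upwards [this] with y hy
        simp [hy]
      exact contDiffAt_const.congr_of_eventuallyEq this
  · filter_upwards [χ.eventuallyEq_one] with y hy
    simp [hy]

open scoped ContDiff Topology in
lemma aux_assemble (k : ℝ) (D : Set (ℝ × ℝ)) (γ : ℝ → ℝ) (hγ : ContDiffAt ℝ ω γ 0)
    (h0 : γ 0 = 0)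
    (hO : (fun v => γ v + k * v ^ 2) =O[𝓝 0] fun v => v ^ 3)
    (hD : ∀ᶠ p in 𝓝 (0 : ℝ × ℝ), p ∈ D → p.1 = γ p.2)
    (hD' : ∀ᶠ v in 𝓝 (0 : ℝ), v ≠ 0 → (γ v, v) ∈ D) :
    ∃ γ₁ : ℝ → ℝ, ContDiff ℝ (⊤ : ℕ∞) γ₁ ∧ γ₁ 0 = 0 ∧ deriv γ₁ 0 = 0 ∧
      ((fun v => γ₁ v + k * v ^ 2) =O[nhds 0] fun v => v ^ 3) ∧
      ∃ U ∈ nhds (0 : ℝ × ℝ),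
        closure D ∩ U = {p : ℝ × ℝ | p.1 = γ₁ p.2} ∩ U := by
  obtain ⟨g, hg, hgf⟩ := aux_extend γ hγ
  have hO' : (fun v => g v + k * v ^ 2) =O[𝓝 0] fun v => v ^ 3 := by
    refine hO.congr' ?_ Filter.EventuallyEq.rfl
    filter_upwards [hgf] with v hv
    simp [hv]
  have g0 : g 0 = 0 := by rw [hgf.eq_of_nhds, h0]
  have hs : Filter.Tendsto (fun p : ℝ × ℝ => p.2) (𝓝 0) (𝓝 0) := by
    have : Continuous (fun p : ℝ × ℝ => p.2) := continuous_snd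
    simpa using this.tendsto 0
  refine ⟨g, hg, g0, ?_, hO', ?_⟩
  · have hd : HasDerivAt (fun v => g v + k * v ^ 2) 0 0 := by
      rw [hasDerivAt_iff_isLittleO]
      have : (fun v : ℝ => v ^ 3) =o[𝓝 0] fun v => v := by
        simpa using isLittleO_pow_pow (𝕜 := ℝ) (show 1 < 3 by norm_num)
      simpa [g0] using hO'.trans_isLittleO this
    have h2 : HasDerivAt (fun v : ℝ => k * v ^ 2) 0 0 := by
      simpa using ((hasDerivAt_pow 2 (0:ℝ)).const_mul k)
    have := hd.sub h2
    have e : ((fun v => g v + k * v ^ 2) - fun v : ℝ => k * v ^ 2) = g := by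
      ext v; simp
    rw [e] at this
    simpa using this.deriv
  · have A : ∀ᶠ p in 𝓝 (0 : ℝ × ℝ), p ∈ D → p.1 = g p.2 := by
      filter_upwards [hD, hs.eventually hgf] with p h1 h2 h3
      rw [h2, h1 h3]
    have B1 : ∀ᶠ v in 𝓝 (0 : ℝ), v ≠ 0 → (g v, v) ∈ D := by
      filter_upwards [hD', hgf] with v h1 h2
      rw [h2]; exact h1
    obtain ⟨U, hU, hUo, hU0⟩ := eventually_nhds_iff.1 (A.and (hs.eventually B1))
    refine ⟨U, hUo.mem_nhds hU0, ?_⟩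
    ext p
    constructor
    · rintro ⟨hp, hpU⟩
      refine ⟨?_, hpU⟩
      have hcl : IsClosed {p : ℝ × ℝ | p.1 = g p.2} :=
        isClosed_eq continuous_fst (hg.continuous.comp continuous_snd)
      have : p ∈ closure (U ∩ D) := hUo.inter_closure ⟨hpU, hp⟩
      exact closure_minimal (fun q hq => (hU q hq.1).1 hq.2) hcl this
    · rintro ⟨hp, hpU⟩
      refine ⟨?_, hpU⟩
      have hp' : p = (g p.2, p.2) := Prod.ext hp rfl
      by_cases hv : p.2 = 0
      · rw [hv, g0] at hp'
        rw [hp']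
        have ht : Filter.Tendsto (fun v => (g v, v)) (𝓝[≠] (0:ℝ)) (𝓝 ((0:ℝ), (0:ℝ))) := by
          have : Continuous (fun v => (g v, v)) := hg.continuous.prodMk continuous_id
          have := this.tendsto 0
          rw [g0] at this
          exact this.mono_left nhdsWithin_le_nhds
        refine mem_closure_of_tendsto ht ?_
        exact eventually_nhdsWithin_iff.2 B1
      · apply subset_closure
        rw [hp']
        exact (hU p hpU).2 hv

open scoped ContDiff Topology in
lemma aux_implicit (k : ℝ) (φ : ℝ → ℝ) (hφ : ContDiffAt ℝ ω φ 0) (φ0 : φ 0 = 0) :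
    ∃ γ : ℝ → ℝ, ContDiffAt ℝ ω γ 0 ∧ γ 0 = 0 ∧
      (∀ᶠ p in 𝓝 (0 : ℝ × ℝ),
        p.1 + k * (p.2 ^ 2 - p.2 * φ p.1 + φ p.1 ^ 2) = 0 → p.1 = γ p.2) ∧
      (∀ᶠ v in 𝓝 (0 : ℝ), γ v + k * (v ^ 2 - v * φ (γ v) + φ (γ v) ^ 2) = 0) ∧
      ((fun v => γ v + k * v ^ 2) =O[𝓝 0] fun v => v ^ 3) ∧
      (∀ᶠ v in 𝓝 (0 : ℝ), v ≠ 0 → φ (γ v) ≠ 2 * v) := by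
  let F : ℝ × ℝ → ℝ := fun p => p.2 + k * (p.1 ^ 2 - p.1 * φ p.2 + φ p.2 ^ 2)
  have F0 : F (0, 0) = 0 := by simp [F, φ0]
  have hφ2 : ContDiffAt ℝ ω (fun p : ℝ × ℝ => φ p.2) (0, 0) :=
    ContDiffAt.comp (0, 0) (g := φ) (by exact hφ) contDiffAt_snd
  have cF : ContDiffAt ℝ ω F (0, 0) := by
    refine contDiffAt_snd.add (contDiffAt_const.mul
      (((contDiffAt_fst.pow 2).sub (contDiffAt_fst.mul hφ2)).add (hφ2.pow 2)))
  have key : fderiv ℝ F (0, 0) ∘L .inr ℝ ℝ ℝ = ContinuousLinearMap.id ℝ ℝ := by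
    have hF : HasFDerivAt F (fderiv ℝ F (0, 0)) ((0 : ℝ), (0 : ℝ)) :=
      (cF.differentiableAt (by simp)).hasFDerivAt
    have hi : HasFDerivAt (fun u : ℝ => ((0 : ℝ), u)) (.inr ℝ ℝ ℝ) 0 :=
      (ContinuousLinearMap.inr ℝ ℝ ℝ).hasFDerivAt
    have h1 := HasFDerivAt.comp (0:ℝ) hF hi
    have hφd := (hφ.differentiableAt (by simp)).hasDerivAt
    have h2 : HasDerivAt (F ∘ fun u : ℝ => ((0 : ℝ), u)) 1 0 := by
      have := (hasDerivAt_id (0:ℝ)).add ((hφd.pow 2).const_mul k)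
      simp only [φ0] at this
      have e : (F ∘ fun u : ℝ => ((0 : ℝ), u)) = id + fun y => k * (φ ^ 2) y := by
        funext u; simp [F]
      rw [e]
      simpa using this
    have h3 := h1.unique h2.hasFDerivAt
    rw [h3]; ext; simp
  have inv : (fderiv ℝ F (0, 0) ∘L .inr ℝ ℝ ℝ).IsInvertible := by
    rw [key]; exact ⟨ContinuousLinearEquiv.refl ℝ ℝ, rfl⟩
  have hn : (ω : WithTop ℕ∞) ≠ 0 := by simp
  let γ := cF.implicitFunction hn inv
  have hγ : ContDiffAt ℝ ω γ 0 := cF.contDiffAt_implicitFunction hn inv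
  have γ0 : γ 0 = 0 := cF.implicitFunction_apply_self hn inv
  have hE : ∀ᶠ v in 𝓝 (0 : ℝ), γ v + k * (v ^ 2 - v * φ (γ v) + φ (γ v) ^ 2) = 0 := by
    have := cF.eventually_apply_implicitFunction hn inv
    rw [F0] at this
    exact this
  have hI : ∀ᶠ p in 𝓝 (0 : ℝ × ℝ),
      p.1 + k * (p.2 ^ 2 - p.2 * φ p.1 + φ p.1 ^ 2) = 0 → p.1 = γ p.2 := by
    have h1 := cF.eventually_apply_eq_iff_implicitFunction hn inv
    rw [F0] at h1
    have hs : Filter.Tendsto (fun p : ℝ × ℝ => (p.2, p.1)) (𝓝 0) (𝓝 ((0:ℝ), (0:ℝ))) := by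
      have : Continuous (fun p : ℝ × ℝ => (p.2, p.1)) := by fun_prop
      simpa using this.tendsto 0
    filter_upwards [hs.eventually h1] with p hp h
    exact (hp.1 h).symm
  have Oγ : γ =O[𝓝 0] fun v => v := by
    simpa [γ0] using (hγ.differentiableAt (by simp)).isBigO_sub
  have Oφ : φ =O[𝓝 0] fun v => v := by
    simpa [φ0] using (hφ.differentiableAt (by simp)).isBigO_sub
  have tγ : Filter.Tendsto γ (𝓝 0) (𝓝 0) := by
    simpa [γ0] using hγ.continuousAt.tendsto
  have Oφγ : (fun v => φ (γ v)) =O[𝓝 0] γ := Oφ.comp_tendsto tγ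
  have O1 := Oφγ.trans Oγ
  have Oid : (fun v : ℝ => v) =O[𝓝 0] fun v => v := isBigO_refl _ _
  have O2 : γ =O[𝓝 0] fun v => v ^ 2 := by
    have h1 : (fun v : ℝ => -k * (v ^ 2 - v * φ (γ v) + φ (γ v) ^ 2)) =O[𝓝 0]
        fun v => v ^ 2 := by
      refine IsBigO.const_mul_left (((isBigO_refl _ _).sub ?_).add (O1.pow 2)) _
      simpa [sq] using Oid.mul O1
    refine h1.congr' ?_ Filter.EventuallyEq.rfl
    filter_upwards [hE] with v hv
    linarith
  have O3 := Oφγ.trans O2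
  refine ⟨γ, hγ, γ0, hI, hE, ?_, ?_⟩
  · have h1 : (fun v : ℝ => k * (v * φ (γ v) - φ (γ v) * φ (γ v))) =O[𝓝 0]
        fun v => v * v ^ 2 := by
      exact IsBigO.const_mul_left ((Oid.mul O3).sub (O1.mul O3)) _
    refine h1.congr' ?_ (.of_forall fun v => by ring)
    filter_upwards [hE] with v hv
    linarith
  · have : (fun v : ℝ => v ^ 2) =o[𝓝 0] fun v => v := by
      simpa using isLittleO_pow_pow (𝕜 := ℝ) (show 1 < 2 by norm_num)
    have := (O3.trans_isLittleO this).bound (show (0:ℝ) < 1 by norm_num)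
    filter_upwards [this] with v hv hv0 h
    rw [h, norm_mul] at hv
    have : 0 < ‖v‖ := norm_pos_iff.2 hv0
    norm_num at hv this
    have := abs_pos.2 hv0
    linarith

open scoped ContDiff Topology in
lemma aux_zero (a b : ℝ) (ha : a ≠ 0) :
    ∀ᶠ v in 𝓝 (0 : ℝ), v ≠ 0 → ∃ w, w ≠ v ∧
      a / 2 * (v + w) + b / 6 * (v ^ 2 + v * w + w ^ 2) = 0 := by
  have ht : Filter.Tendsto (fun v : ℝ => |b| * |v|) (𝓝 0) (𝓝 0) := by
    have : Continuous (fun v : ℝ => |b| * |v|) := by fun_prop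
    simpa using this.tendsto 0
  have := ht.eventually (gt_mem_nhds (show (0:ℝ) < |a| / 2 by positivity))
  filter_upwards [this] with v hv hv0
  -- w = t * v
  have hbv : |b * v| < |a| / 2 := by rwa [abs_mul]
  let f : ℝ → ℝ := fun t => a / 2 * (1 + t) + b * v / 6 * (1 + t + t ^ 2)
  have hc : ContinuousOn f (Set.uIcc (-3/2) (-1/2)) := by
    apply Continuous.continuousOn; fun_prop
  have hm : (0:ℝ) ∈ Set.uIcc (f (-3/2)) (f (-1/2)) := by
    have h := abs_lt.1 hbv
    simp only [f]
    rcases lt_or_gt_of_ne ha with h' | h'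
    · rw [abs_of_neg h'] at h
      rw [Set.mem_uIcc]; right
      constructor <;> linarith
    · rw [abs_of_pos h'] at h
      rw [Set.mem_uIcc]; left
      constructor <;> linarith
  obtain ⟨t, ht, hft⟩ := intermediate_value_uIcc hc hm
  rw [Set.uIcc_of_le (by norm_num)] at ht
  refine ⟨t * v, ?_, ?_⟩
  · intro h
    have : t = 1 := by
      apply mul_right_cancel₀ hv0; rw [h, one_mul]
    linarith [ht.2]
  · simp only [f] at hft
    linear_combination v * hft

theorem stmt10 (b3 a20 a11 a02 a30 a21 a12 a03 : ℝ) (ha02 : a02 ≠ 0)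
    (g : ℝ × ℝ → ℝ × ℝ × ℝ)
    (hg : ∀ p : ℝ × ℝ, g p =
      (p.1, p.1 * p.2 + b3 / 6 * p.2 ^ 3,
        a20 / 2 * p.1 ^ 2 + a11 * p.1 * p.2 + a02 / 2 * p.2 ^ 2 +
          a30 / 6 * p.1 ^ 3 + a21 / 2 * p.1 ^ 2 * p.2 + a12 / 2 * p.1 * p.2 ^ 2 +
          a03 / 6 * p.2 ^ 3)) :
    ∃ γ₁ : ℝ → ℝ, ContDiff ℝ (⊤ : ℕ∞) γ₁ ∧ γ₁ 0 = 0 ∧ deriv γ₁ 0 = 0 ∧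
      ((fun v => γ₁ v + b3 / 6 * v ^ 2) =O[nhds 0] fun v => v ^ 3) ∧
      ∃ U ∈ nhds (0 : ℝ × ℝ),
        closure {p : ℝ × ℝ | ∃ q : ℝ × ℝ, q ≠ p ∧ g q = g p} ∩ U =
          {p : ℝ × ℝ | p.1 = γ₁ p.2} ∩ U := by
  have hmem : ∀ u v : ℝ, (∃ q : ℝ × ℝ, q ≠ (u, v) ∧ g q = g (u, v)) ↔
      ∃ w, w ≠ v ∧ u + b3 / 6 * (v ^ 2 + v * w + w ^ 2) = 0 ∧
        a11 * u + a02 / 2 * (v + w) + a21 / 2 * u ^ 2 + a12 / 2 * u * (v + w) +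
          a03 / 6 * (v ^ 2 + v * w + w ^ 2) = 0 := by
    intro u v
    constructor
    · rintro ⟨⟨u', w⟩, hne, h⟩
      rw [hg, hg] at h
      simp only [Prod.mk.injEq] at h
      obtain ⟨rfl, h1, h2⟩ := h
      have hw : w ≠ v := fun h => hne (by rw [h])
      have hw' : w - v ≠ 0 := sub_ne_zero.2 hw
      refine ⟨w, hw, mul_left_cancel₀ hw' ?_, mul_left_cancel₀ hw' ?_⟩
      · linear_combination h1
      · linear_combination h2
    · rintro ⟨w, hw, h1, h2⟩
      refine ⟨(u, w), fun h => hw (congrArg Prod.snd h), ?_⟩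
      rw [hg, hg]
      simp only [Prod.mk.injEq]
      refine ⟨trivial, ?_, ?_⟩
      · linear_combination (w - v) * h1
      · linear_combination (w - v) * h2
  by_cases hb : b3 = 0
  · refine aux_assemble (b3 / 6) _ (fun _ => 0) contDiffAt_const rfl ?_ ?_ ?_
    · simp only [hb]; simpa using isBigO_zero _ _
    · refine .of_forall fun p hp => ?_
      obtain ⟨w, -, h1, -⟩ := (hmem p.1 p.2).1 hp
      simpa [hb] using h1
    · filter_upwards [aux_zero a02 a03 ha02] with v hv hv0
      obtain ⟨w, hw, h⟩ := hv hv0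
      refine (hmem 0 v).2 ⟨w, hw, by simp [hb], ?_⟩
      linear_combination h
  · let φ : ℝ → ℝ := fun u =>
      -(2 * (a11 - a03 / b3) * u + a21 * u ^ 2) / (a02 + a12 * u)
    have hφ : ContDiffAt ℝ (⊤ : WithTop ℕ∞) φ 0 := by
      refine ContDiffAt.div ?_ ?_ (by simpa using ha02)
      · exact ContDiff.contDiffAt (by fun_prop)
      · exact ContDiff.contDiffAt (by fun_prop)
    obtain ⟨γ, hγ, γ0, hI, hE, hO, hN⟩ := aux_implicit (b3 / 6) φ hφ (by simp [φ])
    have hne : ∀ᶠ u in nhds (0 : ℝ), a02 + a12 * u ≠ 0 := by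
      have : Continuous (fun u : ℝ => a02 + a12 * u) := by fun_prop
      exact this.continuousAt.eventually_ne (by simpa using ha02)
    have hs : Filter.Tendsto (fun p : ℝ × ℝ => p.1) (nhds 0) (nhds 0) := by
      have : Continuous (fun p : ℝ × ℝ => p.1) := continuous_fst
      simpa using this.tendsto 0
    have tγ : Filter.Tendsto γ (nhds 0) (nhds 0) := by
      simpa [γ0] using hγ.continuousAt.tendsto
    refine aux_assemble (b3 / 6) _ γ hγ γ0 hO ?_ ?_
    · filter_upwards [hI, hs.eventually hne] with p h1 h2 hp
      obtain ⟨w, -, h3, h4⟩ := (hmem p.1 p.2).1 hp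
      apply h1
      have hw : φ p.1 = p.2 + w := by
        simp only [φ]
        rw [div_eq_iff h2]
        have h5 : a03 / b3 * b3 = a03 := div_mul_cancel₀ _ hb
        linear_combination (-2) * h4 + 2 * (a03 / b3) * h3 -
          (p.2 ^ 2 + p.2 * w + w ^ 2) / 3 * h5
      rw [hw]
      linear_combination h3
    · filter_upwards [hE, hN, tγ.eventually hne] with v h1 h2 h3 hv
      have hw : φ (γ v) * (a02 + a12 * γ v) =
          -(2 * (a11 - a03 / b3) * γ v + a21 * γ v ^ 2) := by
        simp only [φ]
        rw [div_mul_cancel₀ _ h3]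
      refine (hmem (γ v) v).2 ⟨φ (γ v) - v, ?_, ?_, ?_⟩
      · intro h
        exact h2 hv (by linarith)
      · linear_combination h1
      · have h5 : a03 / b3 * b3 = a03 := div_mul_cancel₀ _ hb
        linear_combination hw / 2 + a03 / b3 * h1 - (v ^ 2 - v * φ (γ v) + φ (γ v) ^ 2) / 6 * h5
end

section
/- Every Whitney umbrella germ can be brought to normal form: if g : (ℝ²,0) → (ℝ³,0) is A-equivalent to (u,v) ↦ (u, uv, v²), then there exist T ∈ SO(3) and a diffeomorphism germ φ of (ℝ²,0) such that the 3-jet of T∘g∘φ is (u, uv + (b₃/6)v³, Σ_{i+j=2,3} (a_{ij}/(i!j!)) u^i v^j) with a₀₂ ≠ 0, for some real constants b₃, a_{ij}. -/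
open Asymptotics

lemma rot_exists (M : Matrix (Fin 3) (Fin 3) ℝ) (hM : M.det ≠ 0) :
    ∃ T : Matrix (Fin 3) (Fin 3) ℝ, T * T.transpose = 1 ∧ T.det = 1 ∧
      (T * M) 1 0 = 0 ∧ (T * M) 2 0 = 0 ∧ (T * M) 1 2 = 0 ∧
      (T * M) 0 0 ≠ 0 ∧ (T * M) 1 1 ≠ 0 ∧ (T * M) 2 2 ≠ 0 := by
  obtain ⟨a, ha⟩ : ∃ a, a = M 0 0 := ⟨_, rfl⟩
  obtain ⟨b, hb⟩ : ∃ a, a = M 1 0 := ⟨_, rfl⟩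
  obtain ⟨c, hc⟩ : ∃ a, a = M 2 0 := ⟨_, rfl⟩
  obtain ⟨d, hd⟩ : ∃ a, a = M 0 2 := ⟨_, rfl⟩
  obtain ⟨e, he⟩ : ∃ a, a = M 1 2 := ⟨_, rfl⟩
  obtain ⟨f, hf⟩ : ∃ a, a = M 2 2 := ⟨_, rfl⟩
  rw [Matrix.det_fin_three] at hM
  have h1 : 0 < a^2+b^2+c^2 := by
    by_contra h
    have h1 : a = 0 := by nlinarith [sq_nonneg a, sq_nonneg b, sq_nonneg c]
    have h2 : b = 0 := by nlinarith [sq_nonneg a, sq_nonneg b, sq_nonneg c]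
    have h3 : c = 0 := by nlinarith [sq_nonneg a, sq_nonneg b, sq_nonneg c]
    apply hM; rw [← ha, ← hb, ← hc, h1, h2, h3]; ring
  obtain ⟨x, hx⟩ : ∃ x, x = b*f-c*e := ⟨_, rfl⟩
  obtain ⟨y, hy⟩ : ∃ x, x = c*d-a*f := ⟨_, rfl⟩
  obtain ⟨z, hz⟩ : ∃ x, x = a*e-b*d := ⟨_, rfl⟩
  have h2 : 0 < x^2+y^2+z^2 := by
    by_contra h
    have h1 : x = 0 := by nlinarith [sq_nonneg x, sq_nonneg y, sq_nonneg z]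
    have h2 : y = 0 := by nlinarith [sq_nonneg x, sq_nonneg y, sq_nonneg z]
    have h3 : z = 0 := by nlinarith [sq_nonneg x, sq_nonneg y, sq_nonneg z]
    apply hM; rw [← ha, ← hb, ← hc, ← hd, ← he, ← hf]
    linear_combination -(M 0 1) * (h1-hx) -(M 1 1) * (h2-hy) -(M 2 1) * (h3-hz)
  obtain ⟨r, hr⟩ : ∃ r : ℝ, r^2 * (a^2+b^2+c^2) = 1 := by
    refine ⟨(√(a^2+b^2+c^2))⁻¹, ?_⟩
    rw [inv_pow, Real.sq_sqrt h1.le]; field_simp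
  obtain ⟨s, hs⟩ : ∃ r : ℝ, r^2 * (x^2+y^2+z^2) = 1 := by
    refine ⟨(√(x^2+y^2+z^2))⁻¹, ?_⟩
    rw [inv_pow, Real.sq_sqrt h2.le]; field_simp
  have o1 : a*x+b*y+c*z = 0 := by rw [hx, hy, hz]; ring
  have o2 : d*x+e*y+f*z = 0 := by rw [hx, hy, hz]; ring
  let T : Matrix (Fin 3) (Fin 3) ℝ := !![r*a, r*b, r*c; s*x, s*y, s*z;
    r*s*(b*z-c*y), r*s*(c*x-a*z), r*s*(a*y-b*x)]
  have e3 : (r*s*(b*z-c*y))^2 + (r*s*(c*x-a*z))^2 + (r*s*(a*y-b*x))^2 = 1 := by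
    linear_combination hr + r^2*(a^2+b^2+c^2)*hs - r^2*s^2*(a*x+b*y+c*z)*o1
  have hT1 : T * T.transpose = 1 := by
    ext i j
    fin_cases i <;> fin_cases j <;> simp [T, Matrix.mul_apply, Fin.sum_univ_three] <;>
    first
    | linear_combination hr
    | linear_combination hs
    | linear_combination e3
    | linear_combination r*s*o1
    | ring
  have hT2 : T.det = 1 := by
    simp [T, Matrix.det_fin_three]
    linear_combination e3
  have z1 : (T * M) 1 0 = 0 := by
    simp [T, Matrix.mul_apply, Fin.sum_univ_three, ← ha, ← hb, ← hc]
    linear_combination s * o1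
  have z2 : (T * M) 2 0 = 0 := by
    simp [T, Matrix.mul_apply, Fin.sum_univ_three, ← ha, ← hb, ← hc]
    ring
  have z3 : (T * M) 1 2 = 0 := by
    simp [T, Matrix.mul_apply, Fin.sum_univ_three, ← hd, ← he, ← hf]
    linear_combination s * o2
  have hdet : (T * M).det ≠ 0 := by
    rw [Matrix.det_mul, hT2, one_mul, Matrix.det_fin_three]; exact hM
  rw [Matrix.det_fin_three, z1, z2, z3] at hdet
  refine ⟨T, hT1, hT2, z1, z2, z3, ?_, ?_, ?_⟩ <;> intro h <;> apply hdet <;> rw [h] <;> ring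

lemma bigO_mul' {f g : ℝ × ℝ → ℝ} {i j k : ℕ}
    (hf : f =O[nhds 0] fun p : ℝ × ℝ => ‖p‖ ^ i) (hg : g =O[nhds 0] fun p : ℝ × ℝ => ‖p‖ ^ j)
    (h : k ≤ i + j) :
    (fun p => f p * g p) =O[nhds 0] fun p : ℝ × ℝ => ‖p‖ ^ k := by
  refine (hf.mul hg).trans ?_
  simp_rw [← pow_add]
  apply IsBigO.of_bound 1
  have : ∀ᶠ p : ℝ × ℝ in nhds 0, ‖p‖ < 1 := by
    have := Metric.ball_mem_nhds (0 : ℝ × ℝ) one_pos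
    filter_upwards [this] with p hp
    simpa using hp
  filter_upwards [this] with p hp
  rw [one_mul, norm_pow, norm_pow, norm_norm]
  exact pow_le_pow_of_le_one (norm_nonneg _) hp.le h

lemma bigO_const (c : ℝ) : (fun _ : ℝ × ℝ => c) =O[nhds 0] fun p : ℝ × ℝ => ‖p‖ ^ 0 := by
  simpa using isBigO_const_const c (one_ne_zero (α := ℝ)) (nhds (0 : ℝ × ℝ))

lemma bigO_mono {f : ℝ × ℝ → ℝ} {i j : ℕ} 
    (hf : f =O[nhds 0] fun p : ℝ × ℝ => ‖p‖ ^ i) (h : j ≤ i) :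
    f =O[nhds 0] fun p : ℝ × ℝ => ‖p‖ ^ j := by
  simpa using bigO_mul' hf (bigO_const 1) (k := j) (by omega)

lemma bigO_fst : (fun p : ℝ × ℝ => p.1) =O[nhds 0] fun p : ℝ × ℝ => ‖p‖ ^ 1 := by
  simp only [pow_one]; exact isBigO_fst_prod'.norm_right
lemma bigO_snd : (fun p : ℝ × ℝ => p.2) =O[nhds 0] fun p : ℝ × ℝ => ‖p‖ ^ 1 := by
  simp only [pow_one]; exact isBigO_snd_prod'.norm_right

lemma trunc_gen (u1 u2 u3 v1 v2 : ℝ × ℝ → ℝ)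
    (h1 : u1 =O[nhds 0] fun p : ℝ × ℝ => ‖p‖ ^ 1)
    (h2 : u2 =O[nhds 0] fun p : ℝ × ℝ => ‖p‖ ^ 2)
    (h3 : u3 =O[nhds 0] fun p : ℝ × ℝ => ‖p‖ ^ 3)
    (k1 : v1 =O[nhds 0] fun p : ℝ × ℝ => ‖p‖ ^ 1)
    (k2 : v2 =O[nhds 0] fun p : ℝ × ℝ => ‖p‖ ^ 2) (c1 c2 c3 c4 c5 c6 c7 : ℝ) :
    (fun p => (c1 * (u1 p + u2 p + u3 p) + c2 * ((u1 p + u2 p + u3 p) * (v1 p + v2 p))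
      + c3 * (v1 p + v2 p)^2 + c4 * (u1 p + u2 p + u3 p)^2
      + c5 * ((u1 p + u2 p + u3 p)^2 * (v1 p + v2 p))
      + c6 * ((u1 p + u2 p + u3 p) * (v1 p + v2 p)^2) + c7 * (u1 p + u2 p + u3 p)^3)
      - (c1 * u1 p + (c1 * u2 p + c2 * (u1 p * v1 p) + c3 * v1 p^2 + c4 * u1 p^2)
        + (c1 * u3 p + c2 * (u1 p * v2 p + u2 p * v1 p) + 2 * c3 * (v1 p * v2 p)
          + 2 * c4 * (u1 p * u2 p) + c5 * (u1 p^2 * v1 p) + c6 * (u1 p * v1 p^2)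
          + c7 * u1 p^3))) =O[nhds 0] fun p : ℝ × ℝ => ‖p‖ ^ 4 := by
  have hu23 := h2.add (bigO_mono h3 (by norm_num : 2 ≤ 3))
  have hu := h1.add (bigO_mono hu23 (by norm_num : 1 ≤ 2))
  have hv := k1.add (bigO_mono k2 (by norm_num : 1 ≤ 2))
  have cm : ∀ (c : ℝ) {f : ℝ × ℝ → ℝ}, f =O[nhds 0] (fun p : ℝ × ℝ => ‖p‖ ^ 4) →
    (fun p => c * f p) =O[nhds 0] (fun p : ℝ × ℝ => ‖p‖ ^ 4) := fun c f h => h.const_mul_left c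
  have u11 := bigO_mul' h1 h1 (le_refl 2)
  have uu1 := bigO_mul' hu h1 (le_refl 2)
  have uu := bigO_mul' hu hu (le_refl 2)
  have v11 := bigO_mul' k1 k1 (le_refl 2)
  have t2 := (bigO_mul' h2 k2 (le_refl 4)).add (bigO_mul' h3 hv (le_refl 4))
  have t3 := bigO_mul' k2 k2 (le_refl 4)
  have t4 := (bigO_mul' h2 h2 (le_refl 4)).add
    (bigO_mul' h3 (hu.add (h1.add (bigO_mono h2 (by norm_num : 1 ≤ 2)))) (le_refl 4))
  have t5 := (bigO_mul' hu23 (bigO_mul' (hu.add h1) hv (le_refl 2)) (le_refl 4)).add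
    (bigO_mul' u11 k2 (le_refl 4))
  have t6 := (bigO_mul' hu23 v11 (le_refl 4)).add
    (bigO_mul' k2 (bigO_mul' hu (hv.add k1) (le_refl 2)) (le_refl 4))
  have t7 := bigO_mul' hu23 ((uu.add uu1).add u11) (le_refl 4)
  refine ((((((cm c2 t2).add (cm c3 t3)).add (cm c4 t4)).add (cm c5 t5)).add (cm c6 t6)).add
    (cm c7 t7)).congr_left ?_
  intro p
  ring

lemma taylor3 (f : (Fin 3 → ℝ) → Fin 3 → ℝ) (hf : ContDiff ℝ (⊤ : ℕ∞) f) (h0 : f 0 = 0) :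
    (fun y => f y - (fderiv ℝ f 0 y + (2⁻¹ : ℝ) • fderiv ℝ (fderiv ℝ f) 0 y y
      + (6⁻¹ : ℝ) • iteratedFDeriv ℝ 3 f 0 (fun _ => y))) =O[nhds 0] fun y => ‖y‖ ^ 4 := by
  have hc : Continuous (iteratedFDeriv ℝ 4 f) :=
    (contDiff_infty.1 hf 4).continuous_iteratedFDeriv (by norm_num)
  obtain ⟨C, hC⟩ := (isCompact_closedBall (0 : Fin 3 → ℝ) 1).exists_bound_of_continuousOn
    hc.continuousOn
  apply IsBigO.of_bound (6⁻¹ * C)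
  filter_upwards [Metric.closedBall_mem_nhds (0 : Fin 3 → ℝ) one_pos] with y hy
  have h := map_add_eq_sum_add_integral_iteratedFDeriv (f := f) (x := 0) (y := y) (n := 3)
    (fun t _ => (contDiff_infty.1 hf 4).contDiffAt)
  simp only [zero_add] at h
  rw [h]
  simp only [Finset.sum_range_succ, Finset.range_zero, Finset.sum_empty,
    iteratedFDeriv_zero_apply, h0, iteratedFDeriv_one_apply, iteratedFDeriv_two_apply, Nat.factorial]
  norm_num
  rw [norm_smul]
  have h3 : ‖∫ t in (0:ℝ)..1, (1 - t)^3 • iteratedFDeriv ℝ 4 f (t • y) (fun _ ↦ y)‖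
      ≤ C * ‖y‖^4 * |1 - 0| := by
    apply intervalIntegral.norm_integral_le_of_norm_le_const
    intro t ht
    rw [Set.uIoc_of_le zero_le_one] at ht
    have hy1 : ‖y‖ ≤ 1 := by simpa using hy
    have hb : ‖iteratedFDeriv ℝ 4 f (t • y)‖ ≤ C := by
      apply hC
      simp only [mem_closedBall_zero_iff, norm_smul, Real.norm_eq_abs, abs_of_pos ht.1]
      nlinarith [ht.1, ht.2, norm_nonneg y]
    have ho := (iteratedFDeriv ℝ 4 f (t • y)).le_opNorm (fun _ => y)
    simp only [Finset.prod_const, Finset.card_univ, Fintype.card_fin] at ho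
    rw [norm_smul]
    have h1 : ‖(1-t)^3‖ ≤ 1 := by
      rw [norm_pow]; apply pow_le_one₀ (norm_nonneg _)
      rw [Real.norm_eq_abs, abs_le]; constructor <;> linarith [ht.1, ht.2]
    calc _ ≤ 1 * (‖iteratedFDeriv ℝ 4 f (t • y)‖ * ‖y‖^4) := by gcongr
      _ ≤ C * ‖y‖^4 := by rw [one_mul]; gcongr
  norm_num at h3 ⊢
  linarith

lemma jet_exists (f : (Fin 3 → ℝ) → Fin 3 → ℝ) (hf : ContDiff ℝ (⊤ : ℕ∞) f) (h0 : f 0 = 0) :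
    ∃ q r s c : Fin 3 → ℝ, (fun p : ℝ × ℝ => f ![p.1, p.1 * p.2, p.2 ^ 2] -
      (p.1 • fderiv ℝ f 0 (Pi.single 0 1) + (p.1 * p.2) • fderiv ℝ f 0 (Pi.single 1 1)
        + p.2 ^ 2 • fderiv ℝ f 0 (Pi.single 2 1) + p.1 ^ 2 • q + (p.1 ^ 2 * p.2) • r
        + (p.1 * p.2 ^ 2) • s + p.1 ^ 3 • c)) =O[nhds 0] fun p : ℝ × ℝ => ‖p‖ ^ 4 := by
  obtain ⟨B, hB⟩ : ∃ B, B = fderiv ℝ (fderiv ℝ f) 0 := ⟨_, rfl⟩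
  obtain ⟨D, hD⟩ : ∃ B, B = iteratedFDeriv ℝ 3 f 0 := ⟨_, rfl⟩
  obtain ⟨L, hL⟩ : ∃ B, B = fderiv ℝ f 0 := ⟨_, rfl⟩
  have ht := taylor3 f hf h0
  rw [← hB, ← hD, ← hL] at ht
  rw [← hL]
  let e0 : Fin 3 → ℝ := Pi.single 0 1
  let e1 : Fin 3 → ℝ := Pi.single 1 1
  let e2 : Fin 3 → ℝ := Pi.single 2 1
  let W : ℝ × ℝ → Fin 3 → ℝ := fun p => ![p.1, p.1 * p.2, p.2 ^ 2]
  let w : ℝ × ℝ → Fin 3 → ℝ := fun p => (p.1 * p.2) • e1 + p.2 ^ 2 • e2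
  have hW : ∀ p, W p = p.1 • e0 + w p := by
    intro p; ext i; fin_cases i <;> simp [W, w, e0, e1, e2]
  have hw : w =O[nhds 0] fun p : ℝ × ℝ => ‖p‖ ^ 2 := by
    apply isBigO_pi.2
    intro i
    have a := bigO_mul' bigO_fst bigO_snd (le_refl 2)
    have b := bigO_mul' bigO_snd bigO_snd (le_refl 2)
    fin_cases i
    · simpa [w, e1, e2] using isBigO_zero _ _
    · simpa [w, e1, e2] using a
    · simpa [w, e1, e2, ← pow_two] using b
  have hW1 : W =O[nhds 0] fun p : ℝ × ℝ => ‖p‖ ^ 1 := by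
    apply isBigO_pi.2
    intro i
    have a := bigO_mul' bigO_fst bigO_snd (show 1 ≤ 2 by norm_num)
    have b := bigO_mul' bigO_snd bigO_snd (show 1 ≤ 2 by norm_num)
    fin_cases i
    · simpa [W] using bigO_fst
    · simpa [W] using a
    · simpa [W, ← pow_two] using b
  have hWt : Filter.Tendsto W (nhds 0) (nhds 0) := by
    have : Continuous W := by
      apply continuous_pi; intro i; fin_cases i <;> simp [W] <;> fun_prop
    have h := this.tendsto 0
    have hz : W 0 = 0 := by ext i; fin_cases i <;> simp [W]
    rwa [hz] at h
  have T1 : (fun p => f (W p) - (L (W p) + (2⁻¹ : ℝ) • B (W p) (W p)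
      + (6⁻¹ : ℝ) • D (fun _ => W p))) =O[nhds 0] fun p : ℝ × ℝ => ‖p‖ ^ 4 := by
    refine (ht.comp_tendsto hWt).trans ?_
    have := hW1.norm_left.pow 4
    simpa [Function.comp_def] using this
  have T2 : (fun p => B (w p) (w p)) =O[nhds 0] fun p : ℝ × ℝ => ‖p‖ ^ 4 := by
    have h := (hw.norm_left.mul hw.norm_left)
    refine (IsBigO.of_bound ‖B‖ (Filter.Eventually.of_forall fun p => ?_)).trans
      (h.congr_right (fun p => by ring))
    have := B.le_opNorm₂ (w p) (w p)
    simpa [mul_assoc] using this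
  have T3 : (fun p => D (fun _ => W p) - p.1 ^ 3 • D (fun _ => e0))
      =O[nhds 0] fun p : ℝ × ℝ => ‖p‖ ^ 4 := by
    have hmax : (fun p : ℝ × ℝ => ‖W p‖ + ‖p.1 • e0‖) =O[nhds 0] fun p : ℝ × ℝ => ‖p‖ ^ 1 := by
      refine hW1.norm_left.add ?_
      have := bigO_fst.norm_left
      refine this.congr_left fun p => ?_
      have : ‖e0‖ = 1 := by simp [e0, Pi.norm_single]
      rw [norm_smul, this, mul_one]
    have h := (hmax.pow 2).mul hw.norm_left
    refine (IsBigO.of_bound (‖D‖ * 3) (Filter.Eventually.of_forall fun p => ?_)).trans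
      (h.congr_right (fun p => by ring))
    have h1 := D.norm_image_sub_le (fun _ => W p) (fun _ => p.1 • e0)
    have h2 : D (fun _ => p.1 • e0) = p.1 ^ 3 • D (fun _ => e0) := by
      rw [D.map_smul_univ (fun _ => p.1) (fun _ => e0)]; simp
    have h3 : ((fun _ => W p) - (fun _ => p.1 • e0) : Fin 3 → Fin 3 → ℝ) = fun _ => w p := by
      ext i j; simp [hW]
    rw [h2, h3] at h1
    simp only [pi_norm_const, Fintype.card_fin] at h1
    refine h1.trans ?_
    rw [norm_mul, norm_pow, norm_norm, Real.norm_of_nonneg (by positivity : 0 ≤ ‖W p‖ + ‖p.1 • e0‖)]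
    have h4 : max ‖W p‖ ‖p.1 • e0‖ ≤ ‖W p‖ + ‖p.1 • e0‖ :=
      max_le (by linarith [norm_nonneg (p.1 • e0)]) (by linarith [norm_nonneg (W p)])
    have h5 : max ‖W p‖ ‖p.1 • e0‖ ^ 2 ≤ (‖W p‖ + ‖p.1 • e0‖) ^ 2 := by gcongr
    have h6 := mul_le_mul_of_nonneg_left h5 (by positivity : 0 ≤ ‖D‖ * 3 * ‖w p‖)
    norm_num
    linarith
  refine ⟨(2⁻¹ : ℝ) • B e0 e0, (2⁻¹ : ℝ) • (B e0 e1 + B e1 e0), (2⁻¹ : ℝ) • (B e0 e2 + B e2 e0),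
    (6⁻¹ : ℝ) • D (fun _ => e0), ?_⟩
  refine ((T1.add (T2.const_smul_left (2⁻¹ : ℝ))).add (T3.const_smul_left (6⁻¹ : ℝ))).congr_left ?_
  intro p
  change f (W p) - _ + _ + _ = f (W p) - (p.1 • L e0 + (p.1 * p.2) • L e1 + p.2 ^ 2 • L e2 + _ + _ + _ + _)
  have hLW : L (W p) = p.1 • L e0 + (p.1 * p.2) • L e1 + p.2 ^ 2 • L e2 := by
    rw [hW]; simp [w, add_assoc]
  have hBW : B (W p) (W p) = p.1 ^ 2 • B e0 e0 + (p.1 ^ 2 * p.2) • (B e0 e1 + B e1 e0)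
      + (p.1 * p.2 ^ 2) • (B e0 e2 + B e2 e0) + B (w p) (w p) := by
    rw [hW]
    simp only [map_add, map_smul, _root_.add_apply, _root_.smul_apply]
    have : ∀ x, B x (w p) = (p.1 * p.2) • B x e1 + p.2 ^ 2 • B x e2 := by intro x; simp [w]
    have h' : ∀ x, B (w p) x = (p.1 * p.2) • B e1 x + p.2 ^ 2 • B e2 x := by intro x; simp [w]
    rw [this e0, h' e0]
    module
  rw [hLW, hBW]
  simp only [Pi.smul_apply]
  module

theorem stmt17 (g : ℝ × ℝ → Fin 3 → ℝ) (hgs : ContDiff ℝ (⊤ : ℕ∞) g) (hg0 : g 0 = 0)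
    (φ₁ : ℝ × ℝ → ℝ × ℝ) (φ₂ : (Fin 3 → ℝ) → Fin 3 → ℝ)
    (hφ₁s : ContDiff ℝ (⊤ : ℕ∞) φ₁) (hφ₁0 : φ₁ 0 = 0)
    (hφ₁d : LinearMap.det ((fderiv ℝ φ₁ 0) : ℝ × ℝ →ₗ[ℝ] ℝ × ℝ) ≠ 0)
    (hφ₂s : ContDiff ℝ (⊤ : ℕ∞) φ₂) (hφ₂0 : φ₂ 0 = 0)
    (hφ₂d : LinearMap.det ((fderiv ℝ φ₂ 0) : (Fin 3 → ℝ) →ₗ[ℝ] Fin 3 → ℝ) ≠ 0)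
    (hAeq : ∀ᶠ p : ℝ × ℝ in nhds 0, g (φ₁ p) = φ₂ ![p.1, p.1 * p.2, p.2 ^ 2]) :
    ∃ (T : Matrix (Fin 3) (Fin 3) ℝ) (φ : ℝ × ℝ → ℝ × ℝ)
      (b3 a20 a11 a02 a30 a21 a12 a03 : ℝ),
      T * T.transpose = 1 ∧ T.det = 1 ∧
      ContDiff ℝ (⊤ : ℕ∞) φ ∧ φ 0 = 0 ∧
      LinearMap.det ((fderiv ℝ φ 0) : ℝ × ℝ →ₗ[ℝ] ℝ × ℝ) ≠ 0 ∧
      a02 ≠ 0 ∧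
      (fun p : ℝ × ℝ =>
          T.mulVec (g (φ p)) -
            ![p.1, p.1 * p.2 + b3 / 6 * p.2 ^ 3,
              a20 / 2 * p.1 ^ 2 + a11 * p.1 * p.2 + a02 / 2 * p.2 ^ 2 +
                a30 / 6 * p.1 ^ 3 + a21 / 2 * p.1 ^ 2 * p.2 +
                a12 / 2 * p.1 * p.2 ^ 2 + a03 / 6 * p.2 ^ 3])
        =o[nhds 0] fun p : ℝ × ℝ => ‖p‖ ^ 3 := by
  obtain ⟨q, r, s, c, hjet⟩ := jet_exists φ₂ hφ₂s hφ₂0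
  let M := LinearMap.toMatrix' ((fderiv ℝ φ₂ 0) : (Fin 3 → ℝ) →ₗ[ℝ] Fin 3 → ℝ)
  have hM : M.det ≠ 0 := by rw [LinearMap.det_toMatrix']; exact hφ₂d
  obtain ⟨T, hT1, hT2, z10, z20, z12, n00, n11, n22⟩ := rot_exists M hM
  have hMe : ∀ i j, T.mulVec (fderiv ℝ φ₂ 0 (Pi.single j 1)) i = (T * M) i j := by
    intro i j
    simp only [Matrix.mul_apply, Matrix.mulVec, dotProduct, M, LinearMap.toMatrix'_apply]
    rfl
  -- component jets
  have hcomp : ∀ i, (fun p : ℝ × ℝ => T.mulVec (φ₂ ![p.1, p.1 * p.2, p.2 ^ 2]) i -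
      ((T * M) i 0 * p.1 + (T * M) i 1 * (p.1 * p.2) + (T * M) i 2 * p.2 ^ 2
        + T.mulVec q i * p.1 ^ 2 + T.mulVec r i * (p.1 ^ 2 * p.2)
        + T.mulVec s i * (p.1 * p.2 ^ 2) + T.mulVec c i * p.1 ^ 3))
      =O[nhds 0] fun p : ℝ × ℝ => ‖p‖ ^ 4 := by
    intro i
    have h := fun j => (isBigO_pi.1 hjet j).const_mul_left (T i j)
    refine (((h 0).add (h 1)).add (h 2)).congr_left ?_
    intro p
    simp only [← hMe, Matrix.mulVec, dotProduct, Fin.sum_univ_three, Pi.sub_apply, Pi.add_apply,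
      Pi.smul_apply, smul_eq_mul]
    ring
  obtain ⟨x1, hx1⟩ : ∃ x, x = (T * M) 0 0 := ⟨_, rfl⟩
  obtain ⟨x2, hx2⟩ : ∃ x, x = (T * M) 0 1 := ⟨_, rfl⟩
  obtain ⟨x3, hx3⟩ : ∃ x, x = (T * M) 0 2 := ⟨_, rfl⟩
  obtain ⟨y2, hy2⟩ : ∃ x, x = (T * M) 1 1 := ⟨_, rfl⟩
  obtain ⟨w2, hw2⟩ : ∃ x, x = (T * M) 2 1 := ⟨_, rfl⟩
  obtain ⟨w3, hw3⟩ : ∃ x, x = (T * M) 2 2 := ⟨_, rfl⟩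
  have hX := hcomp 0
  have hY := hcomp 1
  have hZ := hcomp 2
  rw [← hx1, ← hx2, ← hx3] at hX
  rw [z10, ← hy2, z12] at hY
  rw [z20, ← hw2, ← hw3] at hZ
  rw [← hx1] at n00
  rw [← hy2] at n11
  rw [← hw3] at n22
  generalize T.mulVec q 0 = x4 at hX
  generalize T.mulVec r 0 = x5 at hX
  generalize T.mulVec s 0 = x6 at hX
  generalize T.mulVec c 0 = x7 at hX
  generalize T.mulVec q 1 = y4 at hY
  generalize T.mulVec r 1 = y5 at hY
  generalize T.mulVec s 1 = y6 at hY
  generalize T.mulVec c 1 = y7 at hY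
  generalize T.mulVec q 2 = w4 at hZ
  generalize T.mulVec r 2 = w5 at hZ
  generalize T.mulVec s 2 = w6 at hZ
  generalize T.mulVec c 2 = w7 at hZ
  have solve : ∀ a : ℝ, a ≠ 0 → ∀ b : ℝ, ∃ x, a * x + b = 0 := fun a ha b =>
    ⟨-b / a, by field_simp; ring⟩
  obtain ⟨k, hk⟩ := solve x1 n00 (-1)
  have hk0 : k ≠ 0 := by rintro rfl; norm_num at hk
  have hyk : y2 * k ≠ 0 := mul_ne_zero n11 hk0
  obtain ⟨m, hm⟩ := solve y2 n11 (y4 * k)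
  obtain ⟨n, hn⟩ := solve (y2 * k) hyk (-1)
  have hn0 : n ≠ 0 := by rintro rfl; norm_num at hn
  obtain ⟨A, hA⟩ := solve x1 n00 (x2 * k * m + x3 * m ^ 2 + x4 * k ^ 2)
  obtain ⟨B, hB⟩ := solve x1 n00 (x2 * k * n + 2 * x3 * m * n)
  obtain ⟨C, hC⟩ := solve x1 n00 (x3 * n ^ 2)
  obtain ⟨D, hD⟩ := solve (y2 * k) hyk
    (y2 * A * m + 2 * y4 * k * A + y5 * k ^ 2 * m + y6 * k * m ^ 2 + y7 * k ^ 3)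
  obtain ⟨E, hE⟩ := solve (y2 * k) hyk
    (y2 * (A * n + B * m) + 2 * y4 * k * B + y5 * k ^ 2 * n + 2 * y6 * k * m * n)
  obtain ⟨F, hF⟩ := solve (y2 * k) hyk
    (y2 * (B * n + C * m) + 2 * y4 * k * C + y6 * k * n ^ 2)
  obtain ⟨G, hG⟩ := solve x1 n00 (x2 * (k * D + A * m) + 2 * x3 * m * D + 2 * x4 * k * A
    + x5 * k ^ 2 * m + x6 * k * m ^ 2 + x7 * k ^ 3)
  obtain ⟨H, hH⟩ := solve x1 n00 (x2 * (k * E + A * n + B * m) + 2 * x3 * (m * E + n * D)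
    + 2 * x4 * k * B + x5 * k ^ 2 * n + 2 * x6 * k * m * n)
  obtain ⟨I, hI⟩ := solve x1 n00 (x2 * (k * F + B * n + C * m) + 2 * x3 * (m * F + n * E)
    + 2 * x4 * k * C + x6 * k * n ^ 2)
  obtain ⟨J, hJ⟩ := solve x1 n00 (x2 * (C * n) + 2 * x3 * n * F)
  let u1 : ℝ × ℝ → ℝ := fun p => k * p.1
  let u2 : ℝ × ℝ → ℝ := fun p => A * (p.1 * p.1) + B * (p.1 * p.2) + C * (p.2 * p.2)
  let u3 : ℝ × ℝ → ℝ := fun p => G * (p.1 * (p.1 * p.1)) + H * (p.1 * (p.1 * p.2))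
    + I * (p.1 * (p.2 * p.2)) + J * (p.2 * (p.2 * p.2))
  let v1 : ℝ × ℝ → ℝ := fun p => m * p.1 + n * p.2
  let v2 : ℝ × ℝ → ℝ := fun p => D * (p.1 * p.1) + E * (p.1 * p.2) + F * (p.2 * p.2)
  have b11 := bigO_mul' bigO_fst bigO_fst (le_refl 2)
  have b12 := bigO_mul' bigO_fst bigO_snd (le_refl 2)
  have b22 := bigO_mul' bigO_snd bigO_snd (le_refl 2)
  have b111 := bigO_mul' bigO_fst b11 (le_refl 3)
  have b112 := bigO_mul' bigO_fst b12 (le_refl 3)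
  have b122 := bigO_mul' bigO_fst b22 (le_refl 3)
  have b222 := bigO_mul' bigO_snd b22 (le_refl 3)
  have hu1 : u1 =O[nhds 0] fun p : ℝ × ℝ => ‖p‖ ^ 1 := bigO_fst.const_mul_left k
  have hv1 : v1 =O[nhds 0] fun p : ℝ × ℝ => ‖p‖ ^ 1 :=
    (bigO_fst.const_mul_left m).add (bigO_snd.const_mul_left n)
  have hu2 : u2 =O[nhds 0] fun p : ℝ × ℝ => ‖p‖ ^ 2 :=
    ((b11.const_mul_left A).add (b12.const_mul_left B)).add (b22.const_mul_left C)
  have hv2 : v2 =O[nhds 0] fun p : ℝ × ℝ => ‖p‖ ^ 2 :=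
    ((b11.const_mul_left D).add (b12.const_mul_left E)).add (b22.const_mul_left F)
  have hu3 : u3 =O[nhds 0] fun p : ℝ × ℝ => ‖p‖ ^ 3 :=
    (((b111.const_mul_left G).add (b112.const_mul_left H)).add (b122.const_mul_left I)).add
      (b222.const_mul_left J)
  let ψ : ℝ × ℝ → ℝ × ℝ := fun p => (u1 p + u2 p + u3 p, v1 p + v2 p)
  have hψs : ContDiff ℝ (⊤ : ℕ∞) ψ := by
    simp only [ψ, u1, u2, u3, v1, v2]; fun_prop
  have hψ0 : ψ 0 = 0 := by simp [ψ, u1, u2, u3, v1, v2]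
  have hψO : ψ =O[nhds 0] fun p : ℝ × ℝ => ‖p‖ ^ 1 := by
    refine IsBigO.prod_left ?_ ?_
    · exact (hu1.add (bigO_mono hu2 (by norm_num))).add (bigO_mono hu3 (by norm_num))
    · exact hv1.add (bigO_mono hv2 (by norm_num))
  have hψt : Filter.Tendsto ψ (nhds 0) (nhds 0) := by
    have := hψs.continuous.tendsto 0
    rwa [hψ0] at this
  have comp4 : ∀ f : ℝ × ℝ → ℝ, f =O[nhds 0] (fun p : ℝ × ℝ => ‖p‖ ^ 4) →
      (fun p => f (ψ p)) =O[nhds 0] (fun p : ℝ × ℝ => ‖p‖ ^ 4) := by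
    intro f hf
    refine (hf.comp_tendsto hψt).trans ?_
    simpa [Function.comp_def] using hψO.norm_left.pow 4
  have hX' := (comp4 _ hX).add (trunc_gen u1 u2 u3 v1 v2 hu1 hu2 hu3 hv1 hv2 x1 x2 x3 x4 x5 x6 x7)
  have hY' := (comp4 _ hY).add (trunc_gen u1 u2 u3 v1 v2 hu1 hu2 hu3 hv1 hv2 0 y2 0 y4 y5 y6 y7)
  have hZ' := (comp4 _ hZ).add (trunc_gen u1 u2 u3 v1 v2 hu1 hu2 hu3 hv1 hv2 0 w2 w3 w4 w5 w6 w7)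
  have o43 : (fun p : ℝ × ℝ => ‖p‖ ^ 4) =o[nhds 0] fun p : ℝ × ℝ => ‖p‖ ^ 3 := by
    have := (isLittleO_pow_pow (𝕜 := ℝ) (show 3 < 4 by norm_num)).comp_tendsto
      (tendsto_norm_zero (E := ℝ × ℝ))
    simpa [Function.comp_def] using this
  refine ⟨T, fun p => φ₁ (ψ p), 6 * (y2 * C * n),
    2 * (w2 * k * m + w3 * m ^ 2 + w4 * k ^ 2), w2 * k * n + 2 * w3 * m * n, 2 * (w3 * n ^ 2),
    6 * (w2 * (k * D + A * m) + 2 * w3 * m * D + 2 * w4 * k * A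
      + w5 * k ^ 2 * m + w6 * k * m ^ 2 + w7 * k ^ 3),
    2 * (w2 * (k * E + A * n + B * m) + 2 * w3 * (m * E + n * D)
      + 2 * w4 * k * B + w5 * k ^ 2 * n + 2 * w6 * k * m * n),
    2 * (w2 * (k * F + B * n + C * m) + 2 * w3 * (m * F + n * E)
      + 2 * w4 * k * C + w6 * k * n ^ 2),
    6 * (w2 * (C * n) + 2 * w3 * n * F), hT1, hT2, hφ₁s.comp hψs, by simp [hψ0, hφ₁0], ?_, ?_, ?_⟩
  · have hd : HasFDerivAt ψ (((k • ContinuousLinearMap.fst ℝ ℝ ℝ)).prod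
        (m • ContinuousLinearMap.fst ℝ ℝ ℝ + n • ContinuousLinearMap.snd ℝ ℝ ℝ)) 0 := by
      have f1 : HasFDerivAt (fun p : ℝ × ℝ => p.1) (ContinuousLinearMap.fst ℝ ℝ ℝ) 0 := hasFDerivAt_fst
      have f2 : HasFDerivAt (fun p : ℝ × ℝ => p.2) (ContinuousLinearMap.snd ℝ ℝ ℝ) 0 := hasFDerivAt_snd
      have d11 := f1.mul f1
      have d12 := f1.mul f2
      have d22 := f2.mul f2
      have hU := ((f1.const_mul k).add (((d11.const_mul A).add (d12.const_mul B)).add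
        (d22.const_mul C))).add (((((f1.mul d11).const_mul G).add ((f1.mul d12).const_mul H)).add
        ((f1.mul d22).const_mul I)).add ((f2.mul d22).const_mul J))
      have hV := ((f1.const_mul m).add (f2.const_mul n)).add
        (((d11.const_mul D).add (d12.const_mul E)).add (d22.const_mul F))
      refine (hU.prodMk hV).congr_fderiv ?_
      ext <;> simp
    have hd1 : HasFDerivAt φ₁ (fderiv ℝ φ₁ 0) (ψ 0) := by
      rw [hψ0]
      exact (hφ₁s.differentiable (by simp)).differentiableAt.hasFDerivAt
    have hc := (hd1.comp 0 hd).fderiv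
    have hc' : fderiv ℝ (fun p => φ₁ (ψ p)) 0 = _ := hc
    rw [hc', ContinuousLinearMap.toLinearMap_comp, LinearMap.det_comp]
    refine mul_ne_zero hφ₁d ?_
    rw [← LinearMap.det_toMatrix (Module.Basis.finTwoProd ℝ), Matrix.det_fin_two]
    simp [LinearMap.toMatrix_apply]
    exact ⟨hk0, hn0⟩
  · exact mul_ne_zero two_ne_zero (mul_ne_zero n22 (pow_ne_zero 2 hn0))
  · have hev : ∀ᶠ p in nhds (0 : ℝ × ℝ), g (φ₁ (ψ p)) =
      φ₂ ![(ψ p).1, (ψ p).1 * (ψ p).2, (ψ p).2 ^ 2] := hψt.eventually hAeq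
    refine IsBigO.trans_isLittleO ?_ o43
    apply isBigO_pi.2
    intro i
    fin_cases i
    · refine hX'.congr' ?_ Filter.EventuallyEq.rfl
      filter_upwards [hev] with p hp
      simp only [Pi.sub_apply, hp]
      simp [ψ, u1, u2, u3, v1, v2]
      linear_combination (p.1 * hk + p.1^2 * hA + p.1 * p.2 * hB + p.2^2 * hC
        + p.1^3 * hG + p.1^2*p.2 * hH + p.1*p.2^2 * hI + p.2^3 * hJ)
    · refine hY'.congr' ?_ Filter.EventuallyEq.rfl
      filter_upwards [hev] with p hp
      simp only [Pi.sub_apply, hp]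
      simp [ψ, u1, u2, u3, v1, v2]
      linear_combination (p.1^2 * k * hm + p.1 * p.2 * hn
        + p.1^3 * hD + p.1^2*p.2 * hE + p.1*p.2^2 * hF)
    · refine hZ'.congr' ?_ Filter.EventuallyEq.rfl
      filter_upwards [hev] with p hp
      simp only [Pi.sub_apply, hp]
      simp [ψ, u1, u2, u3, v1, v2]
      ring
end
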